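/- (Invariant sets via nonlinear boundary conditions for parabolic systems.) Assume the setting below, together with Requirement 1 and Requirement 2. Let λ̄ : ℝᵐ → ℝᵐ be any mapping such that λ̄(v) = v − ω(v) for every v ∈ ℝᵐ lying outside of W, where ω(v) is the metric projection of v onto W. If the boundary condition ⟨λ̄(f(t,x)), D_x f(t,x)[ν(x)]⟩ = 0 holds for all (t,x) ∈ (0,T) × ∂M, where D_x f(t,x)[ν(x)] denotes the spatial derivative (taken within M) of the map y ↦ f(t,y) at x applied to ν(x), then f(t,x) lies in W for all (t,x) ∈ [0,T] × M. -/

import Mathlib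

open scoped RealInnerProductSpace

/-- `lam` is a supporting vector for `W` at `ω`: it is a unit vector with
`⟪lam, σ⟫ ≤ ⟪lam, ω⟫` for all `σ ∈ W`. -/
def IsSupportingVector {m : ℕ} (W : Set (EuclideanSpace ℝ (Fin m)))
    (ω lam : EuclideanSpace ℝ (Fin m)) : Prop :=
  ‖lam‖ = 1 ∧ ∀ σ ∈ W, ⟪lam, σ⟫ ≤ ⟪lam, ω⟫

/-!
Suppose `f` leaves `W`, and let `d` be the distance to `W`. If `φ` is `C`-Lipschitz on the relevant
compact set, look at a positive maximum `(t, x)` of `exp (-(C + 1) s) * d (f s y)` over the past of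
`t`, and let `w` be the projection of `f t x` and `v := f t x - w`. The affine function
`⟪v, · - w⟫` is at most `‖v‖ * d`, with equality at `f t x`, so the smooth scalar function
`exp (-(C + 1) s) * ⟪v, f s y - w⟫` is maximal at `(t, x)` too. In space this makes the gradient of
`⟪v, f⟫` vanish (at boundary points by the boundary condition) and its Hessian nonpositive; in time
it gives `(C + 1) ‖v‖² ≤ ⟪v, ∂ₜf⟫`. But `⟪v, φ(w)⟫ ≤ 0` because `v` is normal to `W` at `w`, so the
equation yields `⟪v, ∂ₜf⟫ ≤ C ‖v‖²`.
-/

section InvariantSets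

open Filter Metric Set
open scoped NNReal Topology

section NearestPoint

/-- `w` is a metric projection of `v` onto `W`. A relation rather than a function, so that
existence and uniqueness are statements about `W`. -/
structure IsNearestPoint {X : Type*} [PseudoMetricSpace X] (W : Set X) (v w : X) : Prop where
  mem : w ∈ W
  dist_eq : dist v w = infDist v W

theorem IsNearestPoint.norm_sub {F : Type*} [SeminormedAddCommGroup F] {W : Set F} {v w : F}
    (h : IsNearestPoint W v w) : ‖v - w‖ = infDist v W := by
  rw [← dist_eq_norm, h.dist_eq]

variable {F : Type*} [NormedAddCommGroup F] [InnerProductSpace ℝ F]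
  {W : Set F} {v v' w w' : F}

/-- The normal cone of `W` at `ω`: the vectors, of any length, whose inner product is maximized
over `W` by `ω`. -/
def normalCone (W : Set F) (ω : F) : Set F := {lam | ∀ σ ∈ W, ⟪lam, σ - ω⟫ ≤ 0}

theorem eq_zero_of_mem_normalCone_of_mem_interior (hv : v ∈ normalCone W w)
    (hw : w ∈ interior W) : v = 0 := by
  have hmax : IsLocalMax (innerSL ℝ v) w := by
    filter_upwards [mem_interior_iff_mem_nhds.1 hw] with σ hσ
    simpa only [innerSL_apply_apply, inner_sub_right, sub_nonpos] using hv σ hσ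
  have hzero := hmax.hasFDerivAt_eq_zero (innerSL ℝ v).hasFDerivAt
  simpa only [innerSL_apply_apply, inner_self_eq_zero, zero_apply]
    using congrArg (· v) hzero

theorem exists_isNearestPoint (hne : W.Nonempty) (hW : IsComplete W) (hconv : Convex ℝ W)
    (v : F) : ∃ w, IsNearestPoint W v w := by
  obtain ⟨w, hw, hmin⟩ := exists_norm_eq_iInf_of_complete_convex hne hW hconv v
  exact ⟨w, hw, by simpa only [infDist_eq_iInf, dist_eq_norm] using hmin⟩

namespace IsNearestPoint

theorem sub_mem_normalCone (h : IsNearestPoint W v w) (hconv : Convex ℝ W) :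
    v - w ∈ normalCone W w :=
  (norm_eq_iInf_iff_real_inner_le_zero hconv h.mem).1 <| by
    simpa only [infDist_eq_iInf, dist_eq_norm] using h.dist_eq

theorem mem_frontier (h : IsNearestPoint W v w) (hconv : Convex ℝ W) (hv : v ∉ W) :
    w ∈ frontier W := by
  refine ⟨subset_closure h.mem, fun hint ↦ hv ?_⟩
  have hvw := eq_zero_of_mem_normalCone_of_mem_interior (h.sub_mem_normalCone hconv) hint
  rw [sub_eq_zero.1 hvw]
  exact h.mem

theorem dist_le_dist (h : IsNearestPoint W v w) (h' : IsNearestPoint W v' w')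
    (hconv : Convex ℝ W) : dist w w' ≤ dist v v' := by
  have hw := h.sub_mem_normalCone hconv w' h'.mem
  have hw' := h'.sub_mem_normalCone hconv w h.mem
  have hsq : ‖w - w'‖ * ‖w - w'‖ ≤ ‖v - v'‖ * ‖w - w'‖ := calc
    ‖w - w'‖ * ‖w - w'‖ = ⟪v - v', w - w'⟫ + ⟪v - w, w' - w⟫ + ⟪v' - w', w - w'⟫ := by
      rw [← real_inner_self_eq_norm_mul_norm]
      simp only [inner_sub_left, inner_sub_right]
      ring
    _ ≤ ⟪v - v', w - w'⟫ := by linarith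
    _ ≤ ‖v - v'‖ * ‖w - w'‖ := real_inner_le_norm _ _
  rw [dist_eq_norm, dist_eq_norm]
  rcases (norm_nonneg (w - w')).eq_or_lt with hzero | hpos
  · exact hzero ▸ norm_nonneg _
  · exact le_of_mul_le_mul_right hsq hpos

theorem inner_sub_le_norm_mul_infDist (h : IsNearestPoint W v w) (hconv : Convex ℝ W) (z : F) :
    ⟪v - w, z - w⟫ ≤ ‖v - w‖ * infDist z W := by
  rcases (norm_nonneg (v - w)).eq_or_lt with hzero | hpos
  · rw [norm_eq_zero.1 hzero.symm, inner_zero_left, norm_zero, zero_mul]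
  · rw [← div_le_iff₀' hpos, le_infDist ⟨w, h.mem⟩]
    intro σ hσ
    rw [div_le_iff₀' hpos, dist_eq_norm]
    calc ⟪v - w, z - w⟫ = ⟪v - w, z - σ⟫ + ⟪v - w, σ - w⟫ := by
          rw [← inner_add_right, sub_add_sub_cancel]
      _ ≤ ⟪v - w, z - σ⟫ := by linarith [h.sub_mem_normalCone hconv σ hσ]
      _ ≤ ‖v - w‖ * ‖z - σ‖ := real_inner_le_norm _ _

theorem inner_apply_le_of_lipschitzOnWith (h : IsNearestPoint W v w) (hconv : Convex ℝ W)
    (hv : v ∉ W) {ψ : F → F} {C : ℝ≥0} {U : Set F} (hψ : LipschitzOnWith C ψ U)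
    (hvU : v ∈ U) (hwU : w ∈ U)
    (hnormal : ∀ ω ∈ frontier W, ∀ lam ∈ normalCone W ω, ⟪lam, ψ ω⟫ ≤ 0) :
    ⟪v - w, ψ v⟫ ≤ C * ‖v - w‖ ^ 2 := by
  have hψw : ⟪v - w, ψ w⟫ ≤ 0 :=
    hnormal w (h.mem_frontier hconv hv) _ (h.sub_mem_normalCone hconv)
  calc ⟪v - w, ψ v⟫ = ⟪v - w, ψ v - ψ w⟫ + ⟪v - w, ψ w⟫ := by
        rw [← inner_add_right, sub_add_cancel]
    _ ≤ ⟪v - w, ψ v - ψ w⟫ := by linarith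
    _ ≤ ‖v - w‖ * ‖ψ v - ψ w‖ := real_inner_le_norm _ _
    _ ≤ ‖v - w‖ * (C * ‖v - w‖) := by gcongr; exact hψ.norm_sub_le hvU hwU
    _ = C * ‖v - w‖ ^ 2 := by ring

end IsNearestPoint

theorem exists_isCompact_isNearestPoint_mem (hne : W.Nonempty) (hW : IsComplete W)
    (hconv : Convex ℝ W) {K : Set F} (hK : IsCompact K) :
    ∃ U, IsCompact U ∧ K ⊆ U ∧ ∀ v ∈ K, ∀ w, IsNearestPoint W v w → w ∈ U := by
  choose proj hproj using exists_isNearestPoint hne hW hconv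
  have hcont : Continuous proj := (LipschitzWith.of_dist_le_mul (K := 1) fun v v' ↦ by
    simpa using (hproj v).dist_le_dist (hproj v') hconv).continuous
  refine ⟨K ∪ proj '' K, hK.union (hK.image hcont), subset_union_left, fun v hv w hw ↦ .inr ?_⟩
  have hunique : dist (proj v) w ≤ 0 := by
    simpa only [dist_self] using (hproj v).dist_le_dist hw hconv
  exact ⟨v, hv, dist_le_zero.1 hunique⟩

end NearestPoint

theorem second_deriv_nonpos_of_isMaxOn_Icc_left {g g' : ℝ → ℝ} {a b c : ℝ} (hab : a < b)
    (hg : ∀ u ∈ Icc a b, HasDerivWithinAt g (g' u) (Icc a b) u)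
    (hg' : HasDerivWithinAt g' c (Icc a b) a) (hzero : g' a = 0)
    (hmax : IsMaxOn g (Icc a b) a) : c ≤ 0 := by
  by_contra! hc
  have hslope : Tendsto (slope g' a) (𝓝[>] a) (𝓝 c) := by
    rw [← nhdsWithin_Ioc_eq_nhdsGT hab,
      ← hasDerivWithinAt_iff_tendsto_slope' left_notMem_Ioc]
    exact hg'.mono Ioc_subset_Icc_self
  obtain ⟨d, had, hd⟩ := mem_nhdsGT_iff_exists_Ioc_subset.1
    ((hslope.eventually_const_lt hc).and (Ioc_mem_nhdsGT hab))
  have hdb : d ≤ b := (hd ⟨had, le_rfl⟩).2.2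
  obtain ⟨ξ, hξ, hmvt⟩ := exists_hasDerivAt_eq_slope g g' had
    (fun u hu ↦ (hg u ⟨hu.1, hu.2.trans hdb⟩).continuousWithinAt.mono
      (Icc_subset_Icc_right hdb))
    fun u hu ↦ (hg u ⟨hu.1.le, hu.2.le.trans hdb⟩).hasDerivAt
      (Icc_mem_nhds hu.1 (hu.2.trans_le hdb))
  have hslope_pos : 0 < slope g' a ξ := (hd ⟨hξ.1, hξ.2.le⟩).1
  rw [slope_def_field, hzero, sub_zero, div_pos_iff_of_pos_right (sub_pos.2 hξ.1), hmvt,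
    div_pos_iff_of_pos_right (sub_pos.2 had), sub_pos] at hslope_pos
  exact hslope_pos.not_ge (hmax ⟨le_of_lt had, hdb⟩)

section RadialCone

variable {E : Type*} [NormedAddCommGroup E] [NormedSpace ℝ E] {M : Set E} {x e : E}

/-- The directions in which a short straight segment issuing from `x` stays in `M`; the point
`x` itself need not belong to `M`. -/
def radialCone (M : Set E) (x : E) : Set E := {e | ∀ᶠ u in 𝓝[>] (0 : ℝ), x + u • e ∈ M}

theorem mem_radialCone_of_mem_interior (hx : x ∈ interior M) (e : E) : e ∈ radialCone M x := by
  have hline : Tendsto (fun u : ℝ ↦ x + u • e) (𝓝 0) (𝓝 x) :=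
    Continuous.tendsto' (by fun_prop) _ _ (by simp)
  exact nhdsWithin_le_nhds (hline (mem_interior_iff_mem_nhds.1 hx))

theorem fderiv_apply_nonpos_of_mem_radialCone {h : E → ℝ} {D : E →L[ℝ] ℝ}
    (hD : HasFDerivWithinAt h D M x) (hmax : IsMaxOn h M x) (he : e ∈ radialCone M x) :
    D e ≤ 0 :=
  hmax.localize.hasFDerivWithinAt_nonpos hD
    (mem_posTangentConeAt_of_frequently_mem (Eventually.frequently he))

theorem hessian_apply_nonpos_of_mem_radialCone {h : E → ℝ} {D : E → E →L[ℝ] ℝ}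
    {D2 : E →L[ℝ] E →L[ℝ] ℝ} (hx : x ∈ M) (hD : ∀ y ∈ M, HasFDerivWithinAt h (D y) M y)
    (hD2 : HasFDerivWithinAt D D2 M x) (hmax : IsMaxOn h M x) (he : e ∈ radialCone M x)
    (hzero : D x e = 0) : D2 e e ≤ 0 := by
  obtain ⟨ε, hε, hsub⟩ := mem_nhdsGT_iff_exists_Ioc_subset.1 he
  let line : ℝ → E := fun u ↦ x + u • e
  have hline0 : x = line 0 := by simp [line]
  have hmaps : MapsTo line (Icc 0 ε) M := fun u hu ↦ by
    rcases hu.1.eq_or_lt with rfl | hpos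
    exacts [hline0 ▸ hx, hsub ⟨hpos, hu.2⟩]
  have hline (u : ℝ) : HasDerivWithinAt line e (Icc 0 ε) u := by
    simpa [line] using! (((hasDerivAt_id u).smul_const e).const_add x).hasDerivWithinAt
  refine second_deriv_nonpos_of_isMaxOn_Icc_left (g := h ∘ line) (g' := fun u ↦ D (line u) e)
    hε (fun u hu ↦ (hD _ (hmaps hu)).comp_hasDerivWithinAt u (hline u) hmaps) ?_
    (by rwa [← hline0]) (isMaxOn_iff.2 fun u hu ↦ ?_)
  · have hDline := hD2.comp_hasDerivWithinAt_of_eq 0 (hline 0) hmaps hline0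
    simpa using! hDline.clm_apply (hasDerivWithinAt_const (0 : ℝ) (Icc 0 ε) e)
  · simpa only [Function.comp_apply, ← hline0] using isMaxOn_iff.1 hmax _ (hmaps hu)

end RadialCone

section ExponentialWeight

theorem mul_le_deriv_of_isMaxOn_exp_mul {g : ℝ → ℝ} {g' k a t : ℝ} (hat : a < t)
    (hg : HasDerivWithinAt g g' (Icc a t) t)
    (hmax : IsMaxOn (fun s ↦ Real.exp (-k * s) * g s) (Icc a t) t) : k * g t ≤ g' := by
  have hback : (-1 : ℝ) ∈ radialCone (Icc a t) t := by
    filter_upwards [Ioc_mem_nhdsGT (sub_pos.2 hat)] with u hu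
    simp only [smul_eq_mul, mem_Icc]
    constructor <;> linarith [hu.1, hu.2]
  have hexp : HasDerivWithinAt (fun s ↦ Real.exp (-k * s)) (Real.exp (-k * t) * -k)
      (Icc a t) t := by
    simpa using! ((hasDerivAt_id t).const_mul (-k)).exp.hasDerivWithinAt
  have hslope := fderiv_apply_nonpos_of_mem_radialCone (hexp.mul hg).hasFDerivWithinAt hmax hback
  have hfactor : 0 ≤ Real.exp (-k * t) * (g' - k * g t) := by
    simp only [ContinuousLinearMap.toSpanSingleton_apply, smul_eq_mul] at hslope
    linarith
  exact sub_nonneg.1 (nonneg_of_mul_nonneg_right hfactor (Real.exp_pos _))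

theorem nonpos_of_forall_not_isMaxOn_exp_mul {X : Type*} [TopologicalSpace X] {M : Set X}
    (hM : IsCompact M) {T k : ℝ} {g : ℝ → X → ℝ}
    (hg : ContinuousOn (Function.uncurry g) (Icc 0 T ×ˢ M)) (hinit : ∀ x ∈ M, g 0 x ≤ 0)
    (hmax : ∀ t ∈ Ioo 0 T, ∀ x ∈ M, 0 < g t x →
      ¬ IsMaxOn (fun p : ℝ × X ↦ Real.exp (-k * p.1) * g p.1 p.2) (Icc 0 t ×ˢ M) (t, x)) :
    ∀ t ∈ Icc 0 T, ∀ x ∈ M, g t x ≤ 0 := by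
  have hbefore : ∀ t ∈ Ico 0 T, ∀ x ∈ M, g t x ≤ 0 := by
    intro t ht x hx
    by_contra! hpos
    obtain ⟨⟨t₀, x₀⟩, ⟨ht₀, hx₀⟩, hmax₀⟩ := (isCompact_Icc.prod hM).exists_isMaxOn
      (f := fun p ↦ Real.exp (-k * p.1) * g p.1 p.2) ⟨(t, x), right_mem_Icc.2 ht.1, hx⟩
      (.mul (by fun_prop) (hg.mono (by gcongr; exact ht.2.le)))
    have hpos₀ : 0 < g t₀ x₀ := by
      have hle : Real.exp (-k * t) * g t x ≤ Real.exp (-k * t₀) * g t₀ x₀ :=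
        isMaxOn_iff.1 hmax₀ (t, x) ⟨right_mem_Icc.2 ht.1, hx⟩
      exact pos_of_mul_pos_right ((mul_pos (Real.exp_pos _) hpos).trans_le hle)
        (Real.exp_pos _).le
    have ht₀_pos : 0 < t₀ := ht₀.1.lt_of_ne' <| by
      rintro rfl
      exact hpos₀.not_ge (hinit x₀ hx₀)
    exact hmax t₀ ⟨ht₀_pos, ht₀.2.trans_lt ht.2⟩ x₀ hx₀ hpos₀
      (hmax₀.on_subset (by gcongr; exact ht₀.2))
  intro t ht x hx
  rcases ht.1.eq_or_lt with rfl | ht0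
  · exact hinit x hx
  have hcont : ContinuousOn (fun s ↦ g s x) (Icc 0 t) :=
    hg.comp (f := fun s ↦ (s, x)) (by fun_prop) fun s hs ↦ ⟨⟨hs.1, hs.2.trans ht.2⟩, hx⟩
  rw [← closure_Ico ht0.ne] at hcont
  exact le_on_closure (fun s hs ↦ hbefore s ⟨hs.1, hs.2.trans_le ht.2⟩ x hx) hcont
    continuousOn_const (closure_Ico ht0.ne ▸ right_mem_Icc.2 ht.1)

end ExponentialWeight

section NeumannMaximum

variable {E : Type*} [NormedAddCommGroup E] [InnerProductSpace ℝ E] {M : Set E} {x ν : E}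
  {h : E → ℝ}

/-- `ν` is an outward normal of `M` at `x`, in the sense that every direction making an obtuse
angle with `ν` enters `M`. No smoothness of the boundary is assumed, and `ν` need not be a unit
vector. -/
structure IsOutwardNormal (M : Set E) (x ν : E) : Prop where
  ne_zero : ν ≠ 0
  mem_radialCone : ∀ e : E, ⟪e, ν⟫ < 0 → e ∈ radialCone M x

namespace IsOutwardNormal

theorem fderiv_eq_zero (hν : IsOutwardNormal M x ν) {D : E →L[ℝ] ℝ}
    (hD : HasFDerivWithinAt h D M x) (hmax : IsMaxOn h M x) (hDν : D ν ≤ 0) : D = 0 := by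
  have hνν : 0 < ⟪ν, ν⟫ := real_inner_self_pos.2 hν.ne_zero
  have hobtuse (e : E) (he : ⟪e, ν⟫ < 0) : D e ≤ 0 :=
    fderiv_apply_nonpos_of_mem_radialCone hD hmax (hν.mem_radialCone e he)
  have hDν_zero : D ν = 0 := by
    have hinward := hobtuse (-ν) (by rwa [inner_neg_left, neg_lt_zero])
    rw [map_neg, neg_nonpos] at hinward
    exact hDν.antisymm hinward
  -- Since `D ν = 0`, any `e` can be tilted inward without changing `D e`.
  have hnonpos (e : E) : D e ≤ 0 := by
    let c := ⟪e, ν⟫ / ⟪ν, ν⟫ + 1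
    have htilt : ⟪e - c • ν, ν⟫ < 0 := by
      rw [inner_sub_left, real_inner_smul_left, add_mul, div_mul_cancel₀ _ hνν.ne']
      linarith
    simpa [hDν_zero] using hobtuse _ htilt
  ext e
  exact (hnonpos e).antisymm (by simpa using hnonpos (-e))

theorem hessian_apply_nonpos (hν : IsOutwardNormal M x ν) {D : E → E →L[ℝ] ℝ}
    {D2 : E →L[ℝ] E →L[ℝ] ℝ} (hx : x ∈ M) (hD : ∀ y ∈ M, HasFDerivWithinAt h (D y) M y)
    (hD2 : HasFDerivWithinAt D D2 M x) (hmax : IsMaxOn h M x) (hzero : D x = 0) (e : E) :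
    D2 e e ≤ 0 := by
  have hobtuse (e : E) (he : ⟪e, ν⟫ < 0) : D2 e e ≤ 0 :=
    hessian_apply_nonpos_of_mem_radialCone hx hD hD2 hmax (hν.mem_radialCone e he)
      (by rw [hzero, zero_apply])
  have hnonacute (e : E) (he : ⟪e, ν⟫ ≤ 0) : D2 e e ≤ 0 := by
    have hlim : Tendsto (fun s : ℝ ↦ D2 (e - s • ν) (e - s • ν)) (𝓝[>] 0) (𝓝 (D2 e e)) :=
      (Continuous.tendsto' (by fun_prop) _ _ (by simp)).mono_left nhdsWithin_le_nhds
    refine le_of_tendsto hlim ?_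
    filter_upwards [self_mem_nhdsWithin] with s (hs : 0 < s)
    refine hobtuse _ ?_
    rw [inner_sub_left, real_inner_smul_left]
    linarith [mul_pos hs (real_inner_self_pos.2 hν.ne_zero)]
  rcases le_total ⟪e, ν⟫ 0 with he | he
  · exact hnonacute e he
  · simpa using hnonacute (-e) (by rwa [inner_neg_left, neg_nonpos])

end IsOutwardNormal

theorem fderiv_eq_zero_of_isMaxOn_of_neumann {D : E →L[ℝ] ℝ} (hx : x ∈ M)
    (hD : HasFDerivWithinAt h D M x) (hmax : IsMaxOn h M x)
    (hν : x ∈ frontier M → IsOutwardNormal M x ν) (hDν : x ∈ frontier M → D ν ≤ 0) : D = 0 := by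
  by_cases hfr : x ∈ frontier M
  · exact (hν hfr).fderiv_eq_zero hD hmax (hDν hfr)
  · have hint : x ∈ interior M := self_sdiff_frontier M ▸ ⟨hx, hfr⟩
    exact (hmax.isLocalMax (mem_interior_iff_mem_nhds.1 hint)).hasFDerivAt_eq_zero
      (hD.hasFDerivAt (mem_interior_iff_mem_nhds.1 hint))

theorem hessian_apply_nonpos_of_isMaxOn {D : E → E →L[ℝ] ℝ} {D2 : E →L[ℝ] E →L[ℝ] ℝ}
    (hx : x ∈ M) (hD : ∀ y ∈ M, HasFDerivWithinAt h (D y) M y) (hD2 : HasFDerivWithinAt D D2 M x)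
    (hmax : IsMaxOn h M x) (hν : x ∈ frontier M → IsOutwardNormal M x ν) (hzero : D x = 0)
    (e : E) : D2 e e ≤ 0 := by
  by_cases hfr : x ∈ frontier M
  · exact (hν hfr).hessian_apply_nonpos hx hD hD2 hmax hzero e
  · have hint : x ∈ interior M := self_sdiff_frontier M ▸ ⟨hx, hfr⟩
    exact hessian_apply_nonpos_of_mem_radialCone hx hD hD2 hmax
      (mem_radialCone_of_mem_interior hint e) (by rw [hzero, zero_apply])

end NeumannMaximum

namespace IsNearestPoint

variable {F : Type*} [NormedAddCommGroup F] [InnerProductSpace ℝ F] {W : Set F} {w : F}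

theorem isMaxOn_mul_inner {X : Type*} {ρ : X → ℝ} {f : X → F} {A : Set X} {p : X}
    (hw : IsNearestPoint W (f p) w) (hconv : Convex ℝ W) (hρ : ∀ q, 0 ≤ ρ q)
    (hmax : IsMaxOn (fun q ↦ ρ q * infDist (f q) W) A p) :
    IsMaxOn (fun q ↦ ρ q * ⟪f p - w, f q - w⟫) A p := by
  refine isMaxOn_iff.2 fun q hq ↦ ?_
  calc ρ q * ⟪f p - w, f q - w⟫ ≤ ρ q * (‖f p - w‖ * infDist (f q) W) := by
        gcongr
        exacts [hρ q, hw.inner_sub_le_norm_mul_infDist hconv _]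
    _ = ‖f p - w‖ * (ρ q * infDist (f q) W) := by ring
    _ ≤ ‖f p - w‖ * (ρ p * infDist (f p) W) :=
        mul_le_mul_of_nonneg_left (hmax hq) (norm_nonneg _)
    _ = ρ p * ⟪f p - w, f p - w⟫ := by
        rw [real_inner_self_eq_norm_sq, ← hw.norm_sub]
        ring

theorem isMaxOn_inner {X : Type*} {f : X → F} {A : Set X} {x : X}
    (hw : IsNearestPoint W (f x) w) (hconv : Convex ℝ W)
    (hmax : IsMaxOn (fun y ↦ infDist (f y) W) A x) :
    IsMaxOn (fun y ↦ ⟪f x - w, f y⟫) A x := by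
  have hshifted := hw.isMaxOn_mul_inner (ρ := 1) hconv (fun _ ↦ zero_le_one)
    (by simpa only [Pi.one_apply, one_mul] using hmax)
  simpa only [isMaxOn_iff, Pi.one_apply, one_mul, inner_sub_right (f x - w),
    sub_le_sub_iff_right] using hshifted

theorem mul_norm_sq_le_inner_deriv {f : ℝ → F} {f' : F} {k a t : ℝ}
    (hw : IsNearestPoint W (f t) w) (hconv : Convex ℝ W) (hat : a < t)
    (hf : HasDerivWithinAt f f' (Icc a t) t)
    (hmax : IsMaxOn (fun s ↦ Real.exp (-k * s) * infDist (f s) W) (Icc a t) t) :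
    k * ‖f t - w‖ ^ 2 ≤ ⟪f t - w, f'⟫ := by
  have hderiv : HasDerivWithinAt (fun s ↦ ⟪f t - w, f s - w⟫) ⟪f t - w, f'⟫ (Icc a t) t :=
    (innerSL ℝ (f t - w)).hasFDerivAt.comp_hasDerivWithinAt t (hf.sub_const w)
  rw [← real_inner_self_eq_norm_sq]
  exact mul_le_deriv_of_isMaxOn_exp_mul hat hderiv
    (hw.isMaxOn_mul_inner hconv (fun _ ↦ (Real.exp_pos _).le) hmax)

end IsNearestPoint

section ParabolicSystem

variable {E F : Type*} [NormedAddCommGroup E] [InnerProductSpace ℝ E]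
  [NormedAddCommGroup F] [InnerProductSpace ℝ F] {M : Set E} {W : Set F}

theorem inner_fderiv_eq_zero_and_inner_hessian_nonpos {f : E → F} {Df : E → E →L[ℝ] F}
    {D2f : E →L[ℝ] E →L[ℝ] F} {x ν : E} {lam : F} (hx : x ∈ M)
    (hDf : ∀ y ∈ M, HasFDerivWithinAt f (Df y) M y) (hD2f : HasFDerivWithinAt Df D2f M x)
    (hmax : IsMaxOn (fun y ↦ ⟪lam, f y⟫) M x)
    (hν : x ∈ frontier M → IsOutwardNormal M x ν)
    (hbd : x ∈ frontier M → ⟪lam, Df x ν⟫ ≤ 0) (e : E) :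
    ⟪lam, Df x e⟫ = 0 ∧ ⟪lam, D2f e e⟫ ≤ 0 := by
  let post : (E →L[ℝ] F) →L[ℝ] E →L[ℝ] ℝ := ContinuousLinearMap.compL ℝ E F ℝ (innerSL ℝ lam)
  have hD (y : E) (hy : y ∈ M) : HasFDerivWithinAt (fun y ↦ ⟪lam, f y⟫) (post (Df y)) M y :=
    (innerSL ℝ lam).hasFDerivAt.comp_hasFDerivWithinAt y (hDf y hy)
  have hD2 : HasFDerivWithinAt (fun y ↦ post (Df y)) (post.comp D2f) M x :=
    post.hasFDerivAt.comp_hasFDerivWithinAt x hD2f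
  have hzero : post (Df x) = 0 := fderiv_eq_zero_of_isMaxOn_of_neumann hx (hD x hx) hmax hν hbd
  exact ⟨congrArg (· e) hzero, hessian_apply_nonpos_of_isMaxOn hx hD hD2 hmax hν hzero e⟩

theorem stmt_7_general {ι : Type*} [Fintype ι] (hM : IsCompact M) {T : ℝ}
    (hWne : W.Nonempty) (hW : IsComplete W) (hWconv : Convex ℝ W) {φ : ℝ → E → F → F}
    (hφ : ∀ U, IsCompact U →
      ∃ C : ℝ≥0, ∀ t ∈ Ioo 0 T, ∀ x ∈ M, LipschitzOnWith C (φ t x) U)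
    {a : ι → ℝ → E → E} {b : ℝ → E → E} {f f' : ℝ → E → F} {Df : ℝ → E → E →L[ℝ] F}
    {D2f : ℝ → E → E →L[ℝ] E →L[ℝ] F}
    (hf : ContinuousOn (Function.uncurry f) (Icc 0 T ×ˢ M))
    (hft : ∀ t ∈ Ioo 0 T, ∀ x ∈ M, HasDerivAt (fun s ↦ f s x) (f' t x) t)
    (hDf : ∀ t ∈ Ioo 0 T, ∀ x ∈ M, HasFDerivWithinAt (f t) (Df t x) M x)
    (hD2f : ∀ t ∈ Ioo 0 T, ∀ x ∈ M, HasFDerivWithinAt (Df t) (D2f t x) M x)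
    (hPDE : ∀ t ∈ Ioo 0 T, ∀ x ∈ M,
      f' t x = ∑ i, D2f t x (a i t x) (a i t x) + Df t x (b t x) + φ t x (f t x))
    {ν : E → E} (hν : ∀ x ∈ frontier M, IsOutwardNormal M x (ν x))
    (hinit : ∀ x ∈ M, f 0 x ∈ W)
    (hφW : ∀ t ∈ Ioo 0 T, ∀ x ∈ M, ∀ ω ∈ frontier W, ∀ lam ∈ normalCone W ω,
      ⟪lam, φ t x ω⟫ ≤ 0)
    (hbd : ∀ t ∈ Ioo 0 T, ∀ x ∈ frontier M, f t x ∉ W → ∀ w, IsNearestPoint W (f t x) w →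
      ⟪f t x - w, Df t x (ν x)⟫ ≤ 0) :
    ∀ t ∈ Icc 0 T, ∀ x ∈ M, f t x ∈ W := by
  obtain ⟨U, hU, hfU, hprojU⟩ := exists_isCompact_isNearestPoint_mem hWne hW hWconv
    ((isCompact_Icc.prod hM).image_of_continuousOn hf)
  obtain ⟨C, hC⟩ := hφ U hU
  have hWmem (v : F) : v ∈ W ↔ infDist v W = 0 := hW.isClosed.mem_iff_infDist_zero hWne
  suffices hdist : ∀ t ∈ Icc 0 T, ∀ x ∈ M, infDist (f t x) W ≤ 0 from
    fun t ht x hx ↦ (hWmem _).2 ((hdist t ht x hx).antisymm infDist_nonneg)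
  refine nonpos_of_forall_not_isMaxOn_exp_mul (k := C + 1) hM
    ((continuous_infDist_pt W).comp_continuousOn hf) (fun x hx ↦ ((hWmem _).1 (hinit x hx)).le) ?_
  intro t ht x hx hpos hmax
  have hout : f t x ∉ W := fun h ↦ hpos.ne' ((hWmem _).1 h)
  obtain ⟨w, hw⟩ := exists_isNearestPoint hWne hW hWconv (f t x)
  have hv : 0 < ‖f t x - w‖ := hw.norm_sub ▸ hpos
  have hspace : IsMaxOn (fun y ↦ ⟪f t x - w, f t y⟫) M x :=
    hw.isMaxOn_inner hWconv <| isMaxOn_iff.2 fun y hy ↦ le_of_mul_le_mul_left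
      (isMaxOn_iff.1 hmax (t, y) ⟨right_mem_Icc.2 ht.1.le, hy⟩) (Real.exp_pos _)
  have htime : (C + 1) * ‖f t x - w‖ ^ 2 ≤ ⟪f t x - w, f' t x⟫ :=
    hw.mul_norm_sq_le_inner_deriv (f := fun s ↦ f s x) hWconv ht.1
      (hft t ht x hx).hasDerivWithinAt
      (isMaxOn_iff.2 fun s hs ↦ isMaxOn_iff.1 hmax (s, x) ⟨hs, hx⟩)
  have hderivs := inner_fderiv_eq_zero_and_inner_hessian_nonpos hx (hDf t ht) (hD2f t ht x hx)
    hspace (hν x) fun hfr ↦ hbd t ht x hfr hout w hw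
  have hmem : f t x ∈ Function.uncurry f '' (Icc 0 T ×ˢ M) :=
    ⟨(t, x), ⟨Ioo_subset_Icc_self ht, hx⟩, rfl⟩
  have hreact : ⟪f t x - w, φ t x (f t x)⟫ ≤ C * ‖f t x - w‖ ^ 2 :=
    hw.inner_apply_le_of_lipschitzOnWith hWconv hout (hC t ht x hx) (hfU hmem)
      (hprojU _ hmem w hw) (hφW t ht x hx)
  have hsecond : ∑ i, ⟪f t x - w, D2f t x (a i t x) (a i t x)⟫ ≤ 0 :=
    Finset.sum_nonpos fun i _ ↦ (hderivs _).2
  rw [hPDE t ht x hx, inner_add_right, inner_add_right, inner_sum, (hderivs _).1] at htime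
  linarith [pow_pos hv 2]

end ParabolicSystem

theorem inner_nonpos_of_forall_isSupportingVector {m : ℕ} {W : Set (EuclideanSpace ℝ (Fin m))}
    {ω lam z : EuclideanSpace ℝ (Fin m)}
    (h : ∀ lam, IsSupportingVector W ω lam → ⟪lam, z⟫ ≤ 0) (hlam : lam ∈ normalCone W ω) :
    ⟪lam, z⟫ ≤ 0 := by
  rcases eq_or_ne lam 0 with rfl | hne
  · rw [inner_zero_left]
  have hnorm : 0 < ‖lam‖⁻¹ := inv_pos.2 (norm_pos_iff.2 hne)
  have hsupp : IsSupportingVector W ω (‖lam‖⁻¹ • lam) := by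
    refine ⟨norm_smul_inv_norm (𝕜 := ℝ) hne, fun σ hσ ↦ ?_⟩
    rw [← sub_nonpos, ← inner_sub_right, real_inner_smul_left]
    exact mul_nonpos_of_nonneg_of_nonpos hnorm.le (hlam σ hσ)
  have hunit := h _ hsupp
  rw [real_inner_smul_left] at hunit
  exact nonpos_of_mul_nonpos_right hunit hnorm

theorem isOutwardNormal_of_norm_eq_one {E : Type*} [NormedAddCommGroup E] [InnerProductSpace ℝ E]
    {M : Set E} {x ν : E} (hν : ‖ν‖ = 1)
    (hseg : ∀ e : E, ⟪e, ν⟫ < 0 → ∃ ε > (0 : ℝ), ∀ u ∈ Icc (0 : ℝ) ε, x + u • e ∈ M) :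
    IsOutwardNormal M x ν where
  ne_zero := norm_ne_zero_iff.1 (hν ▸ one_ne_zero)
  mem_radialCone e he := by
    obtain ⟨ε, hε, hM⟩ := hseg e he
    filter_upwards [Ioc_mem_nhdsGT hε] with u hu using hM u (Ioc_subset_Icc_self hu)

end InvariantSets

/-- Invariant sets via nonlinear boundary conditions for parabolic systems. -/
theorem stmt_7
    (n m : ℕ)
    -- M is the closure of a bounded domain (bounded connected open set) in ℝⁿ
    (Ω : Set (EuclideanSpace ℝ (Fin n)))
    (hΩopen : IsOpen Ω) (hΩconn : IsConnected Ω) (hΩbdd : Bornology.IsBounded Ω)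
    (M : Set (EuclideanSpace ℝ (Fin n))) (hM : M = closure Ω)
    (T : ℝ) (hT : 0 < T)
    -- W is a nonempty closed convex subset of ℝᵐ
    (W : Set (EuclideanSpace ℝ (Fin m)))
    (hWne : W.Nonempty) (hWcl : IsClosed W) (hWconv : Convex ℝ W)
    -- φ is Lipschitz in v, uniformly in (t,x), on every compact set U ⊆ ℝᵐ
    (φ : ℝ → EuclideanSpace ℝ (Fin n) → EuclideanSpace ℝ (Fin m) →
      EuclideanSpace ℝ (Fin m))
    (hφ : ∀ U : Set (EuclideanSpace ℝ (Fin m)), IsCompact U → ∃ C > (0 : ℝ),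
      ∀ t ∈ Set.Ioo (0 : ℝ) T, ∀ x ∈ M, ∀ v₁ ∈ U, ∀ v₂ ∈ U,
        ‖φ t x v₁ - φ t x v₂‖ ≤ C * ‖v₁ - v₂‖)
    -- drift coefficients
    (ζ : Fin n → ℝ → EuclideanSpace ℝ (Fin n) → ℝ)
    -- the solution f, its time derivative f', its first and second spatial
    -- derivatives (taken within M)
    (f f' : ℝ → EuclideanSpace ℝ (Fin n) → EuclideanSpace ℝ (Fin m))
    (Df : ℝ → EuclideanSpace ℝ (Fin n) →
      (EuclideanSpace ℝ (Fin n) →L[ℝ] EuclideanSpace ℝ (Fin m)))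
    (D2f : ℝ → EuclideanSpace ℝ (Fin n) →
      (EuclideanSpace ℝ (Fin n) →L[ℝ]
        (EuclideanSpace ℝ (Fin n) →L[ℝ] EuclideanSpace ℝ (Fin m))))
    (hfcont : ContinuousOn (fun p : ℝ × EuclideanSpace ℝ (Fin n) => f p.1 p.2)
      (Set.Icc 0 T ×ˢ M))
    (hft : ∀ t ∈ Set.Ioo (0 : ℝ) T, ∀ x ∈ M,
      HasDerivAt (fun s => f s x) (f' t x) t)
    (hftcont : ∀ x ∈ M, ContinuousOn (fun t => f' t x) (Set.Ioo (0 : ℝ) T))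
    (hDf : ∀ t ∈ Set.Ioo (0 : ℝ) T, ∀ x ∈ M,
      HasFDerivWithinAt (f t) (Df t x) M x)
    (hD2f : ∀ t ∈ Set.Ioo (0 : ℝ) T, ∀ x ∈ M,
      HasFDerivWithinAt (Df t) (D2f t x) M x)
    -- the parabolic system
    (hPDE : ∀ t ∈ Set.Ioo (0 : ℝ) T, ∀ x ∈ M,
      f' t x =
        (∑ j : Fin n, D2f t x (EuclideanSpace.single j 1) (EuclideanSpace.single j 1))
        + (∑ j : Fin n, ζ j t x • Df t x (EuclideanSpace.single j 1))
        + φ t x (f t x))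
    -- the outward unit normal on the boundary of M
    (ν : EuclideanSpace ℝ (Fin n) → EuclideanSpace ℝ (Fin n))
    (hν1 : ∀ x ∈ frontier M, ‖ν x‖ = 1)
    (hν2 : ∀ x ∈ frontier M, ∀ e : EuclideanSpace ℝ (Fin n), ⟪e, ν x⟫ < 0 →
      ∃ ε > (0 : ℝ), ∀ u ∈ Set.Icc (0 : ℝ) ε, x + u • e ∈ M)
    -- Requirement 1: the initial value lies in W
    (hreq1 : ∀ x ∈ M, f 0 x ∈ W)
    -- Requirement 2: φ points into W on the boundary of W
    (hreq2 : ∀ t ∈ Set.Ioo (0 : ℝ) T, ∀ x ∈ M, ∀ ω ∈ frontier W,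
      ∀ lam, IsSupportingVector W ω lam → ⟪lam, φ t x ω⟫ ≤ 0)
    -- λ̄ agrees with v ↦ v − ω(v) outside of W, where ω(v) is the metric
    -- projection of v onto W
    (lamBar : EuclideanSpace ℝ (Fin m) → EuclideanSpace ℝ (Fin m))
    (hlamBar : ∀ v ∉ W, ∀ w ∈ W, dist v w = Metric.infDist v W → lamBar v = v - w)
    -- nonlinear boundary condition: ⟪λ̄(f(t,x)), D_x f(t,x)[ν(x)]⟫ = 0 on (0,T) × ∂M
    (hbd : ∀ t ∈ Set.Ioo (0 : ℝ) T, ∀ x ∈ frontier M,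
      ⟪lamBar (f t x), Df t x (ν x)⟫ = 0) :
    -- conclusion: f lies in W everywhere on [0,T] × M
    ∀ t ∈ Set.Icc (0 : ℝ) T, ∀ x ∈ M, f t x ∈ W := by
  have hMcompact : IsCompact M := hM ▸ hΩbdd.isCompact_closure
  refine stmt_7_general (a := fun j _ _ ↦ EuclideanSpace.single j 1)
    (b := fun t x ↦ ∑ j, ζ j t x • EuclideanSpace.single j 1) hMcompact hWne hWcl.isComplete
    hWconv (fun U hU ↦ ?_) hfcont hft hDf hD2f (fun t ht x hx ↦ ?_)
    (fun x hx ↦ isOutwardNormal_of_norm_eq_one (hν1 x hx) (hν2 x hx)) hreq1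
    (fun t ht x hx ω hω lam ↦ inner_nonpos_of_forall_isSupportingVector (hreq2 t ht x hx ω hω))
    (fun t ht x hx hout w hw ↦ ?_)
  · obtain ⟨C, hC, hLip⟩ := hφ U hU
    lift C to NNReal using hC.le
    exact ⟨C, fun t ht x hx ↦
      LipschitzOnWith.of_dist_le_mul fun v₁ h₁ v₂ h₂ ↦ by
        simpa only [dist_eq_norm] using hLip t ht x hx v₁ h₁ v₂ h₂⟩
  · simpa only [map_sum, map_smul] using hPDE t ht x hx
  · exact (hlamBar _ hout w hw.mem hw.dist_eq ▸ hbd t ht x hx).le
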